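/- arXiv:2509.20528 — 2 statements merged into one kernel-verified Lean document; each statement's English description precedes it below -/
import Mathlib

section
/- Let ε > 0 be a real number. For real numbers t and g, the augmented-Lagrangian fixed-point relation t = min(t + ε·g, 0) holds if and only if the normal contact (KKT) conditions hold: t ≤ 0, g ≥ 0, and t·g = 0. -/
/-- The augmented-Lagrangian fixed-point relation `t = min (t + ε * g) 0` holds
iff the normal contact (KKT) conditions hold: `t ≤ 0`, `g ≥ 0`, `t * g = 0`. -/
theorem alm_normal_fixed_point_iff_kkt (ε t g : ℝ) (hε : 0 < ε) :
    t = min (t + ε * g) 0 ↔ (t ≤ 0 ∧ 0 ≤ g ∧ t * g = 0) := by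
  constructor
  · intro h
    rcases le_total (t + ε * g) 0 with h0 | h0
    · -- the minimum is `t + ε * g`, so `ε * g = 0` and the gap is closed
      rw [min_eq_left h0] at h
      have hg : g = 0 := by
        have : ε * g = 0 := by linarith
        exact (mul_eq_zero.mp this).resolve_left hε.ne'
      subst hg
      exact ⟨by linarith, le_rfl, mul_zero t⟩
    · -- the minimum is `0`, so the traction vanishes and `0 ≤ ε * g`
      rw [min_eq_right h0] at h
      subst h
      rw [zero_add] at h0
      exact ⟨le_rfl, nonneg_of_mul_nonneg_right h0 hε, zero_mul g⟩
  · rintro ⟨ht, hg, htg⟩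
    rcases mul_eq_zero.mp htg with rfl | rfl
    · rw [zero_add, min_eq_right (mul_nonneg hε.le hg)]
    · rw [mul_zero, add_zero, min_eq_left ht]
end

section
/- Let E be a real inner product space, let τ ≥ 0 and ε > 0 be real numbers, and let g ∈ E with g ≠ 0. If the unit vector m = −g/‖g‖ satisfies the collinearity equation (‖τ • m + ε • g‖ − τ) • m = ε • g, then ε·‖g‖ ≤ τ. Equivalently, if ε·‖g‖ > τ, then the opposite-direction vector m = −g/‖g‖ does not satisfy the collinearity equation, so choosing ε > τ/‖g‖ excludes the spurious opposite-direction solution. -/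
/-- If the opposite-direction unit vector `m = -(g / ‖g‖)` satisfies the collinearity
equation `(‖τ • m + ε • g‖ - τ) • m = ε • g`, then `ε * ‖g‖ ≤ τ`; hence choosing
`ε > τ / ‖g‖` excludes the spurious opposite-direction solution. -/
theorem collinearity_opposite_direction {E : Type*} [NormedAddCommGroup E]
    [InnerProductSpace ℝ E]
    (τ ε : ℝ) (hτ : 0 ≤ τ) (hε : 0 < ε) (g : E) (hg : g ≠ 0)
    (h : (‖τ • (-(‖g‖⁻¹ • g)) + ε • g‖ - τ) • (-(‖g‖⁻¹ • g)) = ε • g) :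
    ε * ‖g‖ ≤ τ := by
  have hN := norm_nonneg (τ • (-(‖g‖⁻¹ • g)) + ε • g)
  generalize ‖τ • (-(‖g‖⁻¹ • g)) + ε • g‖ = N at h hN
  have hpos : 0 < ‖g‖ := norm_pos_iff.mpr hg
  -- Both sides of `h` are multiples of `g ≠ 0`; comparing coefficients gives `τ - N = ε * ‖g‖`.
  have hcoef : -((N - τ) * ‖g‖⁻¹) = ε := by
    apply smul_left_injective ℝ hg
    simpa only [smul_neg, neg_smul, smul_smul] using h
  have hmul : ε * ‖g‖ = τ - N := by
    rw [← hcoef]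
    field_simp
    ring
  linarith
end
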